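/- Let k ≥ 2 be even and let T be a tree on n vertices of diameter at least k + 4. Then mdi_k(T) > f_k(n). -/

import Mathlib

/-- `J` is a distance-`k` independent set in `G`: any two distinct vertices of `J`
are at graph distance at least `k + 1`. -/
def DkIndep {V : Type*} (G : SimpleGraph V) (k : ℕ) (J : Set V) : Prop :=
  ∀ ⦃u⦄, u ∈ J → ∀ ⦃v⦄, v ∈ J → u ≠ v → k + 1 ≤ G.dist u v

/-- `J` is a maximal distance-`k` independent set (`k`-MDIS) of `G`. -/
def MaxDkIndep {V : Type*} (G : SimpleGraph V) (k : ℕ) (J : Set V) : Prop :=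
  DkIndep G k J ∧ ∀ J', DkIndep G k J' → J ⊆ J' → J' = J

/-- `mdi G k` is the number of maximal distance-`k` independent sets of `G`. -/
noncomputable def mdi {V : Type*} (G : SimpleGraph V) (k : ℕ) : ℕ :=
  {J : Set V | MaxDkIndep G k J}.ncard

/-- `f_k(n)` from the paper. -/
def fk (k n : ℕ) : ℕ :=
  if n ≤ k + 1 then n else n - (n - k % 2) / (k / 2 + 1) + 1

/-- closed ball `N_k[x]`. -/
def ball {V : Type*} (G : SimpleGraph V) (k : ℕ) (x : V) : Set V :=
  {v | G.dist x v ≤ k}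

/-- a leaf is a vertex of degree 1. -/
def IsLeaf {V : Type*} (G : SimpleGraph V) (v : V) : Prop :=
  (G.neighborSet v).ncard = 1

/-- eccentricity of a vertex. -/
noncomputable def ecc {V : Type*} [Fintype V] (G : SimpleGraph V) (v : V) : ℕ :=
  Finset.univ.sup (G.dist v)

/-- diameter of a finite graph. -/
noncomputable def gdiam {V : Type*} [Fintype V] (G : SimpleGraph V) : ℕ :=
  Finset.univ.sup (ecc G)

/-- a central vertex is one of minimum eccentricity. -/
def IsCentral {V : Type*} [Fintype V] (G : SimpleGraph V) (v : V) : Prop :=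
  ∀ u, ecc G v ≤ ecc G u

/-- a `k`-twin: some other vertex has the same closed `k`-ball. -/
def KTwin {V : Type*} (G : SimpleGraph V) (k : ℕ) (u : V) : Prop :=
  ∃ v, v ≠ u ∧ ball G k u = ball G k v

/-- a diametral leaf: a leaf whose eccentricity equals the diameter. -/
def IsDiametralLeaf {V : Type*} [Fintype V] (G : SimpleGraph V) (u : V) : Prop :=
  IsLeaf G u ∧ ecc G u = gdiam G

/-- a `k`-special pair. -/
def KSpecial {V : Type*} [Fintype V] (G : SimpleGraph V) (k : ℕ) (x y : V) : Prop :=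
  IsDiametralLeaf G x ∧ IsDiametralLeaf G y ∧ KTwin G k x ∧ KTwin G k y ∧
    ball G k x ≠ ball G k y

/-- `mdi*_k(G, ℓ)`. -/
noncomputable def mdiStar {V : Type*} (G : SimpleGraph V) (k : ℕ) (ℓ : V) : ℕ :=
  {J : Set V | MaxDkIndep G k J ∧ ℓ ∈ J ∧ ∃ w ∉ J, ball G k w ∩ J = {ℓ}}.ncard

/-- The spider tree `S_{p,m}`: a center (`none`) together with `p` legs of `m` vertices. -/
def spider (p m : ℕ) : SimpleGraph (Option (Fin p × Fin m)) :=
  SimpleGraph.fromRel fun a b =>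
    match a, b with
    | none, some (_, j) => (j : ℕ) = 0
    | some (i, j), some (i', j') => i = i' ∧ (j : ℕ) + 1 = (j' : ℕ)
    | _, _ => False

/-- `S'_{p,m}`: the spider `S_{p,m}` with one leaf at distance `m` from the center removed. -/
def spider' (p m : ℕ) (hp : 0 < p) (hm : 0 < m) :=
  (spider p m).induce
    {v | v ≠ some (⟨0, hp⟩, ⟨m - 1, Nat.sub_lt hm Nat.one_pos⟩)}

/-- The double spider `B_{p₁,p₂,s}`: two adjacent centers (`Sum.inl false`, `Sum.inl true`),
with `p₁` legs of `s` vertices on the first and `p₂` legs of `s` vertices on the second. -/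
def btree (p₁ p₂ s : ℕ) : SimpleGraph (Bool ⊕ ((Fin p₁ ⊕ Fin p₂) × Fin s)) :=
  SimpleGraph.fromRel fun a b =>
    match a, b with
    | Sum.inl x, Sum.inl y => x ≠ y
    | Sum.inl false, Sum.inr (Sum.inl _, j) => (j : ℕ) = 0
    | Sum.inl true, Sum.inr (Sum.inr _, j) => (j : ℕ) = 0
    | Sum.inr (c, j), Sum.inr (c', j') => c = c' ∧ (j : ℕ) + 1 = (j' : ℕ)
    | _, _ => False

/-- `G` contains a subgraph isomorphic to `H`. -/
def ContainsSub {V W : Type*} (G : SimpleGraph V) (H : SimpleGraph W) : Prop :=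
  ∃ f : W → V, Function.Injective f ∧ ∀ a b, H.Adj a b → G.Adj (f a) (f b)

/-- A pendant path on `s` vertices `P 0, …, P (s-1)` attached to `w`:
`P 0` is a leaf, consecutive vertices are adjacent, interior vertices have degree 2,
and `P (s-1)` is adjacent to `w`. -/
def IsPendantPath {V : Type*} (T : SimpleGraph V) (s : ℕ) (P : ℕ → V) (w : V) : Prop :=
  Set.InjOn P (Set.Iio s) ∧ (∀ i < s, P i ≠ w) ∧ IsLeaf T (P 0) ∧
    (∀ i, i + 1 < s → T.Adj (P i) (P (i + 1))) ∧
    (∀ i, 0 < i → i < s → (T.neighborSet (P i)).ncard = 2) ∧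
    T.Adj (P (s - 1)) w

/-- Isomorphism of simple graphs on `Fin n` as a setoid. -/
def graphSetoid (n : ℕ) : Setoid (SimpleGraph (Fin n)) where
  r G H := Nonempty (G ≃g H)
  iseqv := ⟨fun _ => ⟨SimpleGraph.Iso.refl⟩, fun ⟨e⟩ => ⟨e.symm⟩, fun ⟨e⟩ ⟨f⟩ => ⟨e.trans f⟩⟩

/-- The number of isomorphism classes of graphs in a set of graphs on `Fin n`. -/
noncomputable def numIsoClasses {n : ℕ} (S : Set (SimpleGraph (Fin n))) : ℕ :=
  ((fun G => Quotient.mk (graphSetoid n) G) '' S).ncard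

/-- Tree metrics. -/
structure TM {V : Type} (d : V → V → ℕ) : Prop where
  z : ∀ u v, d u v = 0 ↔ u = v
  s : ∀ u v, d u v = d v u
  tri : ∀ u v w, d u w ≤ d u v + d v w
  four : ∀ x y z w, d x y + d z w ≤ d x z + d y w ∨ d x y + d z w ≤ d x w + d y z
  par : ∀ u v w, (d u v + d v w + d u w) % 2 = 0
  geo : ∀ u v i, i ≤ d u v → ∃ w, d u w = i ∧ d w v + i = d u v

theorem tm_closer {V : Type} {T : SimpleGraph V} (hT : T.IsTree) (x v a b : V)
    (ha : T.Adj a v) (hb : T.Adj b v) (h1 : T.dist x v = T.dist x a + 1)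
    (h2 : T.dist x v = T.dist x b + 1) : a = b := by
  obtain ⟨p, hp⟩ := hT.connected.exists_walk_length_eq_dist x a
  obtain ⟨q, hq⟩ := hT.connected.exists_walk_length_eq_dist x b
  have h3 : (p.concat ha).IsPath := by
    apply SimpleGraph.Walk.isPath_of_length_eq_dist
    rw [SimpleGraph.Walk.length_concat]; omega
  have h4 : (q.concat hb).IsPath := by
    apply SimpleGraph.Walk.isPath_of_length_eq_dist
    rw [SimpleGraph.Walk.length_concat]; omega
  have h5 := hT.isAcyclic.path_unique ⟨_, h3⟩ ⟨_, h4⟩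
  have h6 : p.concat ha = q.concat hb := by simpa using h5
  exact (SimpleGraph.Walk.concat_inj h6).1

theorem tm_seq (f : ℕ → ℕ) (N : ℕ) (h1 : ∀ i < N, f i = f (i+1) + 1 ∨ f (i+1) = f i + 1)
    (h2 : ∀ i, i + 1 < N → ¬ (f (i+1) = f i + 1 ∧ f (i+1) = f (i+2) + 1)) :
    ∀ L ≤ N, ∃ a ≤ L, f 0 = f a + a ∧ f L = f a + (L - a) ∧ (a < L → f L = f (L-1) + 1) := by
  intro L
  induction L with
  | zero => intro _; exact ⟨0, by simp⟩
  | succ L ih =>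
    intro hL
    obtain ⟨a, ha, e1, e2, e3⟩ := ih (by omega)
    by_cases haL : a < L
    · refine ⟨a, by omega, e1, ?_⟩
      have e4 := e3 haL
      obtain ⟨M, rfl⟩ : ∃ M, L = M + 1 := ⟨L - 1, by omega⟩
      have := h2 M (by omega)
      have h1' := h1 (M+1) (by omega)
      simp only [Nat.add_sub_cancel] at e4 ⊢
      have e5 : f (M + 1 + 1) = f (M + 1) + 1 := by
        rcases h1' with h | h
        · exact absurd ⟨e4, h⟩ this
        · exact h
      refine ⟨by omega, fun _ => e5⟩
    · have : a = L := by omega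
      subst this
      rcases h1 a (by omega) with h | h
      · exact ⟨a+1, by omega, by omega, by simp, by simp⟩
      · exact ⟨a, by omega, e1, by omega, by simpa using h⟩

theorem tm_med {V : Type} {T : SimpleGraph V} (hT : T.IsTree) (z w : V) (p : T.Walk z w)
    (hp : p.length = T.dist z w) (x : V) :
    ∃ a ≤ p.length, T.dist x z = T.dist x (p.getVert a) + a ∧
      T.dist x w = T.dist x (p.getVert a) + (p.length - a) := by
  have hpath := p.isPath_of_length_eq_dist hp
  obtain ⟨a, h1, h2, h3, -⟩ := tm_seq (fun i => T.dist x (p.getVert i)) p.length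
    (fun i hi => by
      have := hT.dist_eq_dist_add_one_of_adj x (p.adj_getVert_succ hi)
      exact this)
    (fun i hi ⟨e1, e2⟩ => by
      have a1 := p.adj_getVert_succ (i := i) (by omega)
      have a2 := p.adj_getVert_succ (i := i+1) (by omega)
      have := tm_closer hT x _ _ _ a1 a2.symm e1 e2
      have := hpath.getVert_injOn (by simp; omega) (by simp; omega) this
      omega) p.length le_rfl
  refine ⟨a, h1, ?_, ?_⟩
  · simpa using h2
  · simpa using h3

theorem tm_getVert {V : Type} {T : SimpleGraph V} (hT : T.IsTree) (z w : V) (p : T.Walk z w)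
    (i j : ℕ) (hj : i + j ≤ p.length) : T.dist (p.getVert i) (p.getVert (i+j)) ≤ j := by
  induction j with
  | zero => simp
  | succ j ih =>
    have := ih (by omega)
    have h2 := hT.connected.dist_triangle (u := p.getVert i) (v := p.getVert (i+j)) (w := p.getVert (i+(j+1)))
    have h3 := p.adj_getVert_succ (i := i+j) (by omega)
    have h4 := SimpleGraph.dist_eq_one_iff_adj.2 h3
    rw [← add_assoc] at *
    omega

theorem tm_of_tree {V : Type} {T : SimpleGraph V} (hT : T.IsTree) : TM T.dist where
  z u v := hT.connected.dist_eq_zero_iff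
  s u v := SimpleGraph.dist_comm
  tri u v w := hT.connected.dist_triangle
  four x y z w := by
    obtain ⟨p, hp⟩ := hT.connected.exists_walk_length_eq_dist z w
    obtain ⟨a, ha, h1, h2⟩ := tm_med hT z w p hp x
    obtain ⟨b, hb, h3, h4⟩ := tm_med hT z w p hp y
    have t1 := hT.connected.dist_triangle (u := x) (v := p.getVert a) (w := y)
    have t2 := hT.connected.dist_triangle (u := p.getVert a) (v := p.getVert b) (w := y)
    rw [SimpleGraph.dist_comm (u := p.getVert b)] at t2
    rcases le_total a b with h | h
    · have := tm_getVert hT z w p a (b - a) (by omega)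
      rw [Nat.add_sub_cancel' h] at this
      right; omega
    · have := tm_getVert hT z w p b (a - b) (by omega)
      rw [Nat.add_sub_cancel' h, SimpleGraph.dist_comm] at this
      left; omega
  par u v w := by
    obtain ⟨p, hp⟩ := hT.connected.exists_walk_length_eq_dist v w
    rw [← hp]
    clear hp
    induction p with
    | nil => simp; omega
    | cons h p ih =>
      have := hT.dist_eq_dist_add_one_of_adj u h
      simp only [SimpleGraph.Walk.length_cons]
      omega
  geo u v i hi := by
    obtain ⟨p, hp⟩ := hT.connected.exists_walk_length_eq_dist u v
    refine ⟨p.getVert i, ?_⟩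
    have h1 := tm_getVert hT u v p 0 i (by omega)
    have h2 := tm_getVert hT u v p i (p.length - i) (by omega)
    rw [Nat.add_sub_cancel' (by omega)] at h2
    have t1 := hT.connected.dist_triangle (u := u) (v := p.getVert i) (w := v)
    simp at h1 h2
    omega

open Classical in
/-- maximal independent subsets of a finite set. -/
noncomputable def MS {V : Type} (d : V → V → ℕ) (k : ℕ) (S : Finset V) : Finset (Finset V) :=
  S.powerset.filter fun J => (∀ u ∈ J, ∀ v ∈ J, u ≠ v → k < d u v) ∧ ∀ u ∈ S, ∃ v ∈ J, d u v ≤ k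

theorem mem_MS {V : Type} {d : V → V → ℕ} {k : ℕ} {S J : Finset V} :
    J ∈ MS d k S ↔ J ⊆ S ∧ (∀ u ∈ J, ∀ v ∈ J, u ≠ v → k < d u v) ∧
      ∀ u ∈ S, ∃ v ∈ J, d u v ≤ k := by
  simp [MS]

theorem MS_ext {V : Type} {d : V → V → ℕ} (hd : TM d) {k : ℕ} {S J : Finset V} (hJ : J ⊆ S)
    (hi : ∀ u ∈ J, ∀ v ∈ J, u ≠ v → k < d u v) : ∃ K ∈ MS d k S, J ⊆ K := by
  classical
  obtain ⟨K, hK, hm⟩ := Set.Finite.exists_le_maximal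
    (s := {K : Finset V | K ⊆ S ∧ (∀ u ∈ K, ∀ v ∈ K, u ≠ v → k < d u v)})
    ((Finset.finite_toSet S.powerset).subset (fun K hK => by simpa using hK.1)) ⟨hJ, hi⟩
  refine ⟨K, mem_MS.2 ⟨hm.1.1, hm.1.2, ?_⟩, hK⟩
  intro u hu
  by_contra! hc
  have h1 : insert u K ⊆ K := by
    apply hm.2 _ (Finset.subset_insert _ _)
    refine ⟨Finset.insert_subset hu hm.1.1, ?_⟩
    intro a ha b hb hab
    rcases Finset.mem_insert.1 ha with rfl | ha2 <;> rcases Finset.mem_insert.1 hb with rfl | hb2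
    · exact absurd rfl hab
    · exact hc _ hb2
    · rw [hd.s]; exact hc _ ha2
    · exact hm.1.2 _ ha2 _ hb2 hab
  have := hc u (h1 (Finset.mem_insert_self _ _))
  rw [(hd.z u u).2 rfl] at this
  omega

open Classical in
theorem MS_gain {V : Type} {d : V → V → ℕ} (hd : TM d) {k : ℕ} {S : Finset V} {v : V} (hv : v ∈ S)
    (G : Finset (Finset V)) (hG : ∀ J ∈ G, J ∈ MS d k S ∧ v ∈ J ∧ ∃ w ∈ S, w ≠ v ∧
      ∀ u ∈ J, d w u ≤ k → u = v) :
    (MS d k (S.erase v)).card + G.card ≤ (MS d k S).card := by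
  have key : ∀ J ∈ MS d k (S.erase v), v ∉ J := fun J hJ hvJ => by
    simpa using (mem_MS.1 hJ).1 hvJ
  let φ : Finset V → Finset V := fun J => if ∃ u ∈ J, d v u ≤ k then J else insert v J
  have he : ∀ J ∈ MS d k (S.erase v), (φ J).erase v = J := by
    intro J hJ
    have := key J hJ
    simp only [φ]
    split_ifs
    · exact Finset.erase_eq_of_notMem this
    · exact Finset.erase_insert this
  have hcard : ((MS d k (S.erase v)).image φ).card = (MS d k (S.erase v)).card := by
    apply Finset.card_image_of_injOn
    intro a ha b hb hab
    rw [← he a ha, ← he b hb, hab]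
  have hdisj : Disjoint ((MS d k (S.erase v)).image φ) G := by
    rw [Finset.disjoint_left]
    intro K hK hKG
    obtain ⟨J, hJ, rfl⟩ := Finset.mem_image.1 hK
    obtain ⟨-, hvK, w, hw, hwv, hp⟩ := hG _ hKG
    obtain ⟨u, hu, huw⟩ := (mem_MS.1 hJ).2.2 w (Finset.mem_erase.2 ⟨hwv, hw⟩)
    have h1 : u ∈ φ J := by
      rw [← he J hJ] at hu
      exact Finset.mem_of_mem_erase hu
    have := hp u h1 huw
    subst this
    exact key J hJ hu
  rw [← hcard, ← Finset.card_union_of_disjoint hdisj]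
  apply Finset.card_le_card
  intro K hK
  rcases Finset.mem_union.1 hK with hK | hK
  · obtain ⟨J, hJ, rfl⟩ := Finset.mem_image.1 hK
    obtain ⟨h1, h2, h3⟩ := mem_MS.1 hJ
    have h1' : J ⊆ S := h1.trans (Finset.erase_subset _ _)
    simp only [φ]
    split_ifs with hc
    · refine mem_MS.2 ⟨h1', h2, fun u hu => ?_⟩
      by_cases huv : u = v
      · subst huv; exact hc
      · exact h3 u (Finset.mem_erase.2 ⟨huv, hu⟩)
    · push Not at hc
      refine mem_MS.2 ⟨Finset.insert_subset hv h1', ?_, fun u hu => ?_⟩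
      · intro a ha b hb hab
        rcases Finset.mem_insert.1 ha with rfl | ha2 <;> rcases Finset.mem_insert.1 hb with rfl | hb2
        · exact absurd rfl hab
        · exact hc _ hb2
        · rw [hd.s]; exact hc _ ha2
        · exact h2 _ ha2 _ hb2 hab
      · by_cases huv : u = v
        · subst huv; exact ⟨u, Finset.mem_insert_self _ _, by rw [(hd.z u u).2 rfl]; omega⟩
        · obtain ⟨w, hw, h⟩ := h3 u (Finset.mem_erase.2 ⟨huv, hu⟩)
          exact ⟨w, Finset.mem_insert_of_mem hw, h⟩
  · exact (hG K hK).1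

open Classical in
theorem MS_erase {V : Type} {d : V → V → ℕ} (hd : TM d) {k : ℕ} {S : Finset V} {v : V}
    (hv : v ∈ S) : (MS d k (S.erase v)).card ≤ (MS d k S).card := by
  simpa using MS_gain hd hv ∅ (by simp)

open Classical in
theorem MS_twin {V : Type} {d : V → V → ℕ} (hd : TM d) {k : ℕ} {S : Finset V} {v w : V}
    (hv : v ∈ S) (hw : w ∈ S) (hvw : w ≠ v) (ht : ∀ u ∈ S, d u v ≤ k ↔ d u w ≤ k) :
    (MS d k (S.erase v)).card + 1 ≤ (MS d k S).card := by
  obtain ⟨K, hK, hs⟩ := MS_ext hd (k := k) (S := S) (J := {v}) (by simpa using hv)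
    (by simp)
  have hvK : v ∈ K := hs (by simp)
  have := MS_gain hd (k := k) hv {K} (fun J hJ => by
    rw [Finset.mem_singleton.1 hJ]
    refine ⟨hK, hvK, w, hw, hvw, fun u hu h => ?_⟩
    obtain ⟨h1, h2, h3⟩ := mem_MS.1 hK
    by_contra hne
    have h4 := h2 u hu v hvK hne
    have h5 := (ht u (h1 hu)).2 (by rw [hd.s]; exact h)
    omega)
  simpa using this

open Classical in
theorem MS_bulk {V : Type} {d : V → V → ℕ} (hd : TM d) {k : ℕ} (X : Finset V) : ∀ S : Finset V,
    X ⊆ S → (∀ v ∈ X, ∃ w ∈ S, w ∉ X ∧ ∀ u ∈ S, d u v ≤ k ↔ d u w ≤ k) →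
    (MS d k (S \ X)).card + X.card ≤ (MS d k S).card := by
  induction X using Finset.induction_on with
  | empty => intro S _ _; simp
  | insert v X hvX ih =>
    intro S hX h
    have h1 := ih (S.erase v) (fun x hx => Finset.mem_erase.2
      ⟨fun e => hvX (e ▸ hx), hX (Finset.mem_insert_of_mem hx)⟩) (fun x hx => by
        obtain ⟨w, hw, hwX, ht⟩ := h x (Finset.mem_insert_of_mem hx)
        exact ⟨w, Finset.mem_erase.2 ⟨fun e => hwX (e ▸ Finset.mem_insert_self _ _), hw⟩,
          fun e => hwX (Finset.mem_insert_of_mem e), fun u hu => ht u (Finset.mem_of_mem_erase hu)⟩)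
    obtain ⟨w, hw, hwX, ht⟩ := h v (Finset.mem_insert_self _ _)
    have h2 := MS_twin hd (k := k) (hX (Finset.mem_insert_self _ _)) hw
      (fun e => hwX (e ▸ Finset.mem_insert_self _ _)) ht
    have h3 : S.erase v \ X = S \ insert v X := by
      ext a; simp only [Finset.mem_sdiff, Finset.mem_erase, Finset.mem_insert]; tauto
    rw [Finset.card_insert_of_notMem hvX, ← h3]
    omega

open Classical in
theorem MS_bulk' {V : Type} {d : V → V → ℕ} (hd : TM d) {k : ℕ} (X S : Finset V) (hX : X ⊆ S)
    (h : ∀ v ∈ X, ∀ w ∈ X, ∀ u ∈ S, d u v ≤ k → d u w ≤ k) :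
    (MS d k (S \ X)).card + X.card ≤ (MS d k S).card + 1 := by
  rcases X.eq_empty_or_nonempty with rfl | ⟨x, hx⟩
  · simp
  · have h1 := MS_bulk hd (k := k) (X.erase x) S ((Finset.erase_subset _ _).trans hX)
      (fun v hv => ⟨x, hX hx, by simp, fun u hu =>
        ⟨h v (Finset.mem_of_mem_erase hv) x hx u hu, h x hx v (Finset.mem_of_mem_erase hv) u hu⟩⟩)
    have h2 := MS_erase hd (k := k) (S := S \ X.erase x) (v := x) (by simp [hX hx])
    have h3 : (S \ X.erase x).erase x = S \ X := by
      ext a; simp only [Finset.mem_sdiff, Finset.mem_erase]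
      constructor
      · tauto
      · rintro ⟨h4, h5⟩
        exact ⟨fun e => h5 (e ▸ hx), h4, fun e => h5 e.2⟩
    rw [h3] at h2
    have := Finset.card_erase_add_one hx
    omega

open Classical in
theorem MS_complete {V : Type} {d : V → V → ℕ} (hd : TM d) {k : ℕ} (S : Finset V)
    (h : ∀ u ∈ S, ∀ v ∈ S, d u v ≤ k) : S.card ≤ (MS d k S).card := by
  rw [← Finset.card_image_of_injective S (f := fun v => ({v} : Finset V)) Finset.singleton_injective]
  apply Finset.card_le_card
  intro J hJ
  obtain ⟨v, hv, rfl⟩ := Finset.mem_image.1 hJ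
  exact mem_MS.2 ⟨by simpa using hv, by simp, fun u hu => ⟨v, by simp, h u hu v hv⟩⟩

theorem mdi_eq {V : Type} [Fintype V] {T : SimpleGraph V} (hT : T.IsTree) (k : ℕ) :
    mdi T k = (MS T.dist k Finset.univ).card := by
  classical
  have hd := tm_of_tree hT
  unfold mdi
  rw [← Set.ncard_coe_finset, ← Set.ncard_image_of_injective (MS T.dist k Finset.univ : Set (Finset V))
    (Finset.coe_injective (α := V))]
  congr 1
  ext J
  simp only [Set.mem_setOf_eq, Set.mem_image, Finset.mem_coe]
  constructor
  · rintro ⟨h1, h2⟩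
    refine ⟨J.toFinset, ?_, by simp⟩
    obtain ⟨K, hK, hJK⟩ := MS_ext hd (k := k) (S := Finset.univ) (J := J.toFinset) (by simp)
      (fun u hu v hv huv => h1 (by simpa using hu) (by simpa using hv) huv)
    have h3 := h2 (K : Set V) (fun u hu v hv huv => (mem_MS.1 hK).2.1 u hu v hv huv)
      (fun x hx => hJK (by simpa using hx))
    have : J.toFinset = K := by
      ext a; simp [← h3]
    rw [this]; exact hK
  · rintro ⟨K, hK, rfl⟩
    obtain ⟨-, h2, h3⟩ := mem_MS.1 hK
    refine ⟨fun u hu v hv huv => h2 u hu v hv huv, fun J hJ hs => ?_⟩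
    apply Set.Subset.antisymm _ hs
    intro x hx
    obtain ⟨y, hy, hxy⟩ := h3 x (Finset.mem_univ _)
    by_contra hc
    have := hJ hx (hs hy) (fun e => hc (e ▸ hy))
    omega

/-- convex sets. -/
def Cv {V : Type} (d : V → V → ℕ) (S : Finset V) : Prop :=
  ∀ u ∈ S, ∀ v ∈ S, ∀ w, d u w + d w v = d u v → w ∈ S

theorem tm_branch {V : Type} {d : V → V → ℕ} (hd : TM d) {c v u a : V}
    (h1 : d v a = d v c + d c a) (h2 : d u v < d u c + d c v) : d u a = d u c + d c a := by
  have h3 := hd.four u c v a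
  have h4 := hd.tri u c a
  have h5 := hd.s c v
  omega

theorem path_card {V : Type} {d : V → V → ℕ} (hd : TM d) {S : Finset V} (hS : Cv d S) {a b : V}
    (ha : a ∈ S) (hb : b ∈ S) {N : ℕ} (hN : N ≤ d a b) : ∃ P : Finset V, P ⊆ S ∧ P.card = N ∧
      ∀ v ∈ P, 1 ≤ d a v ∧ d a v ≤ N ∧ d a v + d v b = d a b := by
  classical
  have hg := fun i : ℕ => hd.geo a b (min i (d a b)) (min_le_right _ _)
  choose f hf1 hf2 using hg
  refine ⟨(Finset.Icc 1 N).image f, ?_, ?_, ?_⟩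
  · intro v hv
    obtain ⟨i, hi, rfl⟩ := Finset.mem_image.1 hv
    have := hf1 i
    have := hf2 i
    exact hS a ha b hb _ (by omega)
  · rw [Finset.card_image_of_injOn]
    · simp
    · intro i hi j hj hij
      have h1 := hf1 i
      have h2 := hf1 j
      rw [hij, h2] at h1
      simp at hi hj
      omega
  · intro v hv
    obtain ⟨i, hi, rfl⟩ := Finset.mem_image.1 hv
    have := hf1 i
    have := hf2 i
    simp at hi
    omega

open Classical in
/-- the vertices in shallow branches at `c`. -/
noncomputable def XB {V : Type} (d : V → V → ℕ) (m : ℕ) (S : Finset V) (l r c : V) : Finset V :=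
  S.filter fun v => v ≠ c ∧ d v l = d v c + d c l ∧ d v r = d v c + d c r ∧
    ∀ u ∈ S, d u l = d u c + d c l → d u r = d u c + d c r → d u c = m + 1 →
      d v u = d v c + d c u

section
variable {V : Type} {d : V → V → ℕ} {m : ℕ} {S : Finset V} {l r c : V}

theorem mem_XB {v : V} : v ∈ XB d m S l r c ↔ v ∈ S ∧ v ≠ c ∧ d v l = d v c + d c l ∧
    d v r = d v c + d c r ∧
    ∀ u ∈ S, d u l = d u c + d c l → d u r = d u c + d c r → d u c = m + 1 →
      d v u = d v c + d c u := by
  simp [XB]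

theorem XB_sep (hd : TM d) {u v : V} (hv : v ∈ XB d m S l r c) (hu : u ∈ S)
    (hux : u ∉ XB d m S l r c) : d u v = d u c + d c v := by
  by_contra hne
  have hlt : d u v < d u c + d c v := lt_of_le_of_ne (hd.tri _ _ _) hne
  obtain ⟨h1, h2, h3, h4, h5⟩ := mem_XB.1 hv
  apply hux
  refine mem_XB.2 ⟨hu, ?_, tm_branch hd h3 hlt, tm_branch hd h4 hlt,
    fun z hz a1 a2 a3 => tm_branch hd (h5 z hz a1 a2 a3) hlt⟩
  rintro rfl
  rw [(hd.z u u).2 rfl] at hne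
  omega

theorem XB_depth (hd : TM d) (hlr : d l c = m + 1) (hcr : d c r + (m+1) = d l r)
    (hD : ∀ u ∈ S, ∀ v ∈ S, d u v ≤ d l r) (hr : r ∈ S) {v : V}
    (hv : v ∈ XB d m S l r c) : 1 ≤ d v c ∧ d v c ≤ m := by
  obtain ⟨h1, h2, h3, h4, h5⟩ := mem_XB.1 hv
  have a1 : d v c ≠ 0 := fun h => h2 ((hd.z _ _).1 h)
  have a2 := hD v h1 r hr
  have a3 : d v c ≠ m + 1 := by
    intro h
    have := h5 v h1 h3 h4 h
    rw [(hd.z v v).2 rfl] at this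
    omega
  omega

open Classical in
theorem XB_gain (hd : TM d) (hS : Cv d S) (hm : 1 ≤ m) (hlr : d l c = m + 1)
    (hcr : d c r + (m+1) = d l r)
    (hD : ∀ u ∈ S, ∀ v ∈ S, d u v ≤ d l r) (hl : l ∈ S) (hr : r ∈ S) (hc : c ∈ S) :
    (MS d (2*m) (S \ XB d m S l r c)).card + (XB d m S l r c).card ≤ (MS d (2*m) S).card ∨
    ((MS d (2*m) (S \ XB d m S l r c)).card + (XB d m S l r c).card ≤ (MS d (2*m) S).card + 1 ∧
      m ≤ (XB d m S l r c).card) := by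
  set X := XB d m S l r c with hX
  have hXS : X ⊆ S := fun v hv => (mem_XB.1 hv).1
  let Y := X.filter fun v => d v c = m
  let W := X.filter fun v => ¬ d v c = m
  have hdep : ∀ v ∈ X, 1 ≤ d v c ∧ d v c ≤ m := fun v hv => XB_depth hd hlr hcr hD hr hv
  have hsep : ∀ v ∈ X, ∀ u ∈ S, u ∉ X → d u v = d u c + d c v := fun v hv u hu hux =>
    XB_sep hd hv hu hux
  have hcardYW : Y.card + W.card = X.card := Finset.card_filter_add_card_filter_not _
  have hSX : (S \ Y) \ W = S \ X := by
    ext a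
    simp only [Y, W, Finset.mem_sdiff, Finset.mem_filter]
    tauto
  have hW : (MS d (2*m) (S \ X)).card + W.card ≤ (MS d (2*m) (S \ Y)).card := by
    rw [← hSX]
    apply MS_bulk hd
    · intro v hv
      simp only [Y, W, Finset.mem_sdiff, Finset.mem_filter] at *
      exact ⟨hXS hv.1, fun h => hv.2 h.2⟩
    · intro v hv
      obtain ⟨hvX, hvm⟩ := Finset.mem_filter.1 hv
      have hv1 := hdep v hvX
      obtain ⟨p, hp1, hp2⟩ := hd.geo c l (d v c) (by rw [hd.s c l]; omega)
      have hpS : p ∈ S := hS c hc l hl p (by omega)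
      have hs1 := hd.s c l
      have hs2 := hd.s c p
      have hs3 := hd.s c v
      have hpX : p ∉ X := by
        intro h
        have := (mem_XB.1 h).2.2.1
        omega
      have hpr : d p r = d p c + d c r := by
        have := hd.tri p c r
        have := hd.tri l p r
        have := hd.s p l
        omega
      refine ⟨p, ?_, fun h => hpX (Finset.mem_filter.1 h).1, ?_⟩
      · exact Finset.mem_sdiff.2 ⟨hpS, fun h => hpX (Finset.mem_filter.1 h).1⟩
      · intro u hu
        have huS := (Finset.mem_sdiff.1 hu).1
        by_cases huX : u ∈ X
        · have h1 := hdep u huX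
          have h2 := hd.tri u c v
          have h3 := hd.tri u c p
          constructor <;> intro _ <;> omega
        · have h1 := hsep v hvX u huS huX
          have h2 := hd.tri u c p
          by_cases h3 : d u p = d u c + d c p
          · rw [h1, h3, hp1, hs3]
          · have h4 := tm_branch hd hpr (lt_of_le_of_ne h2 h3)
            have h5 := hD u huS r hr
            constructor <;> intro _ <;> omega
  rcases Y.eq_empty_or_nonempty with hY | ⟨x, hx⟩
  · left
    have : Y.card = 0 := by rw [hY]; rfl
    rw [hY, Finset.sdiff_empty] at hW
    omega
  · right
    have hY : (MS d (2*m) (S \ Y)).card + Y.card ≤ (MS d (2*m) S).card + 1 := by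
      apply MS_bulk' hd
      · intro v hv
        exact hXS (Finset.mem_filter.1 hv).1
      · intro v hv w hw u hu h
        obtain ⟨hv1, hv2⟩ := Finset.mem_filter.1 hv
        obtain ⟨hw1, hw2⟩ := Finset.mem_filter.1 hw
        have e1 := hd.s v c
        have e2 := hd.s w c
        by_cases huX : u ∈ X
        · have h1 := hdep u huX
          have h2 := hd.tri u c w
          omega
        · rw [hsep v hv1 u hu huX] at h
          rw [hsep w hw1 u hu huX]
          omega
    refine ⟨by omega, ?_⟩
    obtain ⟨hx1, hx2⟩ := Finset.mem_filter.1 hx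
    have e1 := hd.s x c
    obtain ⟨P, hPS, hPc, hP⟩ := path_card hd hS hc (hXS hx1) (N := m) (by omega)
    rw [← hPc]
    apply Finset.card_le_card
    intro v hv
    by_contra hvX
    have h1 := hsep x hx1 v (hPS hv) hvX
    have h2 := hP v hv
    have h3 := hd.s c v
    omega

open Classical in
theorem XB_Cv (hd : TM d) (hS : Cv d S)
    (hD : ∀ u ∈ S, ∀ v ∈ S, d u v ≤ d l r) (hl : l ∈ S) (hr : r ∈ S) :
    Cv d ((S \ XB d m S l r c).erase l) := by
  intro u hu v hv w hw
  simp only [Finset.mem_erase, Finset.mem_sdiff] at hu hv ⊢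
  obtain ⟨hul, huS, huX⟩ := hu
  obtain ⟨hvl, hvS, hvX⟩ := hv
  have hwS := hS u huS v hvS w hw
  refine ⟨?_, hwS, ?_⟩
  · rintro rfl
    have h1 := hd.four u v w r
    have h2 := hD u huS r hr
    have h3 := hD v hvS r hr
    have h4 : d u w ≠ 0 := fun h => hul ((hd.z _ _).1 h)
    have h5 : d w v ≠ 0 := fun h => hvl ((hd.z _ _).1 h).symm
    have h6 := hd.s v w
    omega
  · intro hwX
    have h1 := XB_sep hd hwX huS huX
    have h2 := XB_sep hd hwX hvS hvX
    have h3 := hd.tri u c v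
    have h4 := hd.s v w
    have h5 := hd.s v c
    have h6 : d w c ≠ 0 := fun h => (mem_XB.1 hwX).2.1 ((hd.z _ _).1 h)
    have h7 := hd.s w c
    omega

open Classical in
theorem XB_one (hd : TM d) (hS : Cv d S) (hm : 1 ≤ m) (hlr : d l c = m + 1)
    (hcr : d c r + (m+1) = d l r)
    (hD : ∀ u ∈ S, ∀ v ∈ S, d u v ≤ d l r) (hl : l ∈ S) (hr : r ∈ S) (hc : c ∈ S)
    (i : ℕ) (hi1 : 2 * m + 2 ≤ i) (hi2 : i ≤ 2 * m + 3) (hi3 : i ≤ d l r) :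
    ∃ J, (J ∈ MS d (2*m) (S \ XB d m S l r c) ∧ l ∈ J ∧ ∃ w ∈ S \ XB d m S l r c, w ≠ l ∧
      ∀ u ∈ J, d w u ≤ 2 * m → u = l) ∧ ∃ y ∈ J, d l y = i ∧ d y r + i = d l r := by
  set X := XB d m S l r c with hX
  obtain ⟨y, hy1, hy2⟩ := hd.geo l r i hi3
  have hyS : y ∈ S := hS l hl r hr y (by omega)
  have scl := hd.s c l
  have syl := hd.s y l
  have scy := hd.s c y
  have hcy : d c y + (m + 1) = i := by
    have h1 := hd.four c y l r
    have h3 := hd.tri l c y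
    have h4 := hd.s r y
    have h5 := hd.s r l
    have h6 := hd.s c r
    omega
  have hyX : y ∉ X := fun h => by
    have := (mem_XB.1 h).2.2.2.1
    omega
  have hlX : l ∉ X := fun h => by
    have := (mem_XB.1 h).2.2.1
    have := (hd.z l l).2 rfl
    omega
  let Z := S.filter fun u => d u l = d u c + d c l ∧ d u r = d u c + d c r ∧ d u c = m + 1
  have hZX : ∀ z ∈ Z, z ∉ X := fun z hz h => by
    obtain ⟨hzS, h1, h2, h3⟩ := Finset.mem_filter.1 hz
    have := (mem_XB.1 h).2.2.2.2 z hzS h1 h2 h3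
    rw [(hd.z z z).2 rfl] at this
    omega
  obtain ⟨J1, hJ1, -⟩ := MS_ext hd (k := 2*m) (S := Z) (J := ∅) (by simp) (by simp)
  obtain ⟨j1, j2, j3⟩ := mem_MS.1 hJ1
  have hzl : ∀ z ∈ J1, 2 * m < d z l := fun z hz => by
    obtain ⟨hzS, h1, h2, h3⟩ := Finset.mem_filter.1 (j1 hz)
    omega
  have hzy : ∀ z ∈ J1, 2 * m < d z y := fun z hz => by
    obtain ⟨hzS, h1, h2, h3⟩ := Finset.mem_filter.1 (j1 hz)
    have := hd.tri z y r
    omega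
  obtain ⟨J, hJ, hs⟩ := MS_ext hd (k := 2*m) (S := S \ X) (J := insert l (insert y J1)) (by
      intro a ha
      rw [Finset.mem_insert, Finset.mem_insert] at ha
      rw [Finset.mem_sdiff]
      rcases ha with rfl | rfl | ha
      · exact ⟨hl, hlX⟩
      · exact ⟨hyS, hyX⟩
      · exact ⟨(Finset.mem_filter.1 (j1 ha)).1, hZX a (j1 ha)⟩) (by
      intro a ha b hb hab
      rw [Finset.mem_insert, Finset.mem_insert] at ha hb
      rcases ha with rfl | rfl | ha <;> rcases hb with rfl | rfl | hb
      · exact absurd rfl hab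
      · omega
      · rw [hd.s]; exact hzl _ hb
      · omega
      · exact absurd rfl hab
      · rw [hd.s]; exact hzy _ hb
      · exact hzl _ ha
      · exact hzy _ ha
      · exact j2 _ ha _ hb hab)
  have hlJ : l ∈ J := hs (by simp)
  have hyJ : y ∈ J := hs (by simp)
  obtain ⟨k1, k2, k3⟩ := mem_MS.1 hJ
  refine ⟨J, ⟨hJ, hlJ, ?_⟩, y, hyJ, hy1, hy2⟩
  obtain ⟨p, hp1, hp2⟩ := hd.geo l c 1 (by omega)
  have spl := hd.s p l
  refine ⟨p, ?_, ?_, ?_⟩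
  · refine Finset.mem_sdiff.2 ⟨hS l hl c hc p (by omega), fun h => ?_⟩
    have := (mem_XB.1 h).2.2.1
    omega
  · rintro rfl
    have := (hd.z p p).2 rfl
    omega
  · intro u hu hpu
    by_contra hul
    have hu1 := k2 u hu l hlJ hul
    obtain ⟨huS, huX⟩ := Finset.mem_sdiff.1 (k1 hu)
    have t1 := hd.tri u p l
    have sup := hd.s u p
    have hul1 : d u l = 2 * m + 1 := by omega
    have par1 := hd.par u c l
    have par2 := hd.par u c r
    have par3 := hd.par l c r
    have tl := hd.tri u c l
    have tr := hd.tri u c r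
    have hur := hD u huS r hr
    by_cases c1 : d u l = d u c + d c l
    · have huc : d u c = m := by omega
      by_cases c2 : d u r = d u c + d c r
      · have : ¬ ∀ z ∈ S, d z l = d z c + d c l → d z r = d z c + d c r → d z c = m + 1 →
            d u z = d u c + d c z := fun h => huX (mem_XB.2 ⟨huS, fun e => by
              rw [(hd.z u c).2 e] at huc; omega, c1, c2, h⟩)
        push Not at this
        obtain ⟨z, hzS, z1, z2, z3, z4⟩ := this
        have hzZ : z ∈ Z := Finset.mem_filter.2 ⟨hzS, z1, z2, z3⟩
        obtain ⟨z', hz', hzz⟩ := j3 z hzZ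
        obtain ⟨-, -, -, z'c⟩ := Finset.mem_filter.1 (j1 hz')
        have f1 := hd.four u z' z c
        have f2 := hd.tri u c z
        have f3 := hd.s z c
        have f4 := hd.s z z'
        have f5 : u ≠ z' := by rintro rfl; omega
        have f6 := k2 u hu z' (hs (by simp [hz'])) f5
        omega
      · have f1 := hd.four u y c r
        have f5 : u ≠ y := by rintro rfl; omega
        have f6 := k2 u hu y hyJ f5
        have f7 := hd.s y c
        omega
    · have : d u r = d u c + d c r := by
        have := hd.four u c l r
        have := hd.s c l
        omega
      omega

open Classical in
theorem XB_step (hd : TM d) (hS : Cv d S) (hm : 1 ≤ m)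
    (hD : ∀ u ∈ S, ∀ v ∈ S, d u v ≤ d l r) (hl : l ∈ S) (hr : r ∈ S)
    (e : ℕ) (he : e ≤ 1) (h2 : 2 * m + 2 + e ≤ d l r) :
    ∃ S' : Finset V, Cv d S' ∧ S'.card < S.card ∧ m + 1 ≤ S'.card ∧
      (m + 1) * (MS d (2*m) S').card + m * S.card + e * (m+1) ≤
        (m + 1) * (MS d (2*m) S).card + m * S'.card := by
  obtain ⟨c, hc1, hc2⟩ := hd.geo l r (m+1) (by omega)
  have hc : c ∈ S := hS l hl r hr c (by omega)
  have hg := XB_gain hd hS hm hc1 hc2 hD hl hr hc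
  have hcv : Cv d ((S \ XB d m S l r c).erase l) := XB_Cv hd hS hD hl hr
  obtain ⟨J, hJ, y, hy, hy1, hy2⟩ := XB_one hd hS hm hc1 hc2 hD hl hr hc (2*m+2) le_rfl
    (by omega) (by omega)
  have hXS : XB d m S l r c ⊆ S := fun v hv => (mem_XB.1 hv).1
  have hlS1 : l ∈ S \ XB d m S l r c := by
    refine Finset.mem_sdiff.2 ⟨hl, fun h => ?_⟩
    have := (mem_XB.1 h).2.2.1
    have := (hd.z l l).2 rfl
    omega
  have hgain : (MS d (2*m) ((S \ XB d m S l r c).erase l)).card + (1 + e) ≤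
      (MS d (2*m) (S \ XB d m S l r c)).card := by
    rcases Nat.le_one_iff_eq_zero_or_eq_one.1 he with rfl | rfl
    · simpa using MS_gain hd hlS1 {J} (fun K hK => by
        rw [Finset.mem_singleton.1 hK]; exact hJ)
    · obtain ⟨J', hJ', y', hy', hy1', hy2'⟩ := XB_one hd hS hm hc1 hc2 hD hl hr hc (2*m+3)
        (by omega) le_rfl (by omega)
      have hne : J ≠ J' := by
        rintro rfl
        have b1 := hd.four y y' l r
        have b2 := hd.s y l
        have b3 := hd.s y' l
        have b4 : y ≠ y' := by rintro rfl; omega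
        have b5 := (mem_MS.1 hJ.1).2.1 y hy y' hy' b4
        omega
      have := MS_gain hd hlS1 {J, J'} (fun K hK => by
        rcases Finset.mem_insert.1 hK with rfl | hK
        · exact hJ
        · rw [Finset.mem_singleton.1 hK]; exact hJ')
      rw [Finset.card_pair hne] at this
      simpa using this
  have hcard : ((S \ XB d m S l r c).erase l).card + 1 + (XB d m S l r c).card = S.card := by
    rw [Finset.card_erase_add_one hlS1, Finset.card_sdiff_add_card_eq_card hXS]
  refine ⟨_, hcv, by omega, ?_, ?_⟩
  · obtain ⟨P, hPS, hPc, hP⟩ := path_card hd hS hc hr (N := m + 1) (by omega)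
    rw [← hPc]
    apply Finset.card_le_card
    intro v hv
    have h1 := hP v hv
    have h2 := hd.s c v
    refine Finset.mem_erase.2 ⟨?_, Finset.mem_sdiff.2 ⟨hPS hv, fun h => ?_⟩⟩
    · rintro rfl
      omega
    · have := (mem_XB.1 h).2.2.2.1
      omega
  · generalize ((S \ XB d m S l r c).erase l).card = s' at *
    generalize (XB d m S l r c).card = g at *
    generalize (MS d (2*m) ((S \ XB d m S l r c).erase l)).card = a at *
    generalize (MS d (2*m) (S \ XB d m S l r c)).card = b at *
    rw [← hcard]
    rcases hg with hg | ⟨hg, hmg⟩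
    · nlinarith
    · nlinarith

open Classical in
theorem XB_weak (hd : TM d) (hm : 1 ≤ m) : ∀ (N : ℕ) (S : Finset V), S.card ≤ N → Cv d S →
    m + 1 ≤ S.card → m * S.card + (m + 1) ≤ (m + 1) * (MS d (2*m) S).card := by
  intro N
  induction N with
  | zero => intro S h1 _ h2; omega
  | succ N ih =>
    intro S hN hS hc
    have hne : (S ×ˢ S).Nonempty := by
      have : S.Nonempty := Finset.card_pos.1 (by omega)
      exact this.product this
    obtain ⟨⟨l, r⟩, hlr, hmax⟩ := Finset.exists_max_image (S ×ˢ S) (fun p => d p.1 p.2) hne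
    obtain ⟨hl, hr⟩ := Finset.mem_product.1 hlr
    have hD : ∀ u ∈ S, ∀ v ∈ S, d u v ≤ d l r := fun u hu v hv =>
      hmax (u, v) (Finset.mem_product.2 ⟨hu, hv⟩)
    simp only at hl hr
    by_cases h1 : 2 * m + 2 ≤ d l r
    · obtain ⟨S', a1, a2, a3, a4⟩ := XB_step hd hS hm hD hl hr 0 (by omega) (by omega)
      have := ih S' (by omega) a1 a3
      omega
    · by_cases h2 : d l r ≤ 2 * m
      · have := MS_complete hd (k := 2*m) S (fun u hu v hv => (hD u hu v hv).trans h2)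
        nlinarith
      · have hlr : d l r = 2 * m + 1 := by omega
        let E := S.filter fun v => d v r = 2 * m + 1
        have hE : (MS d (2*m) (S \ E)).card + E.card ≤ (MS d (2*m) S).card + 1 := by
          apply MS_bulk' hd
          · exact Finset.filter_subset _ _
          · intro v hv w hw u hu h
            obtain ⟨v1, v2⟩ := Finset.mem_filter.1 hv
            obtain ⟨w1, w2⟩ := Finset.mem_filter.1 hw
            by_contra hcon
            have b1 := hD u hu w w1
            have b2 := hD u hu r hr
            have b3 := hD v v1 w w1
            have b4 := hd.par v w r
            have b5 := hd.four u w v r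
            have b6 := hd.s v w
            omega
        have hC := MS_complete hd (k := 2*m) (S \ E) (fun u hu v hv => by
          obtain ⟨u1, u2⟩ := Finset.mem_sdiff.1 hu
          obtain ⟨v1, v2⟩ := Finset.mem_sdiff.1 hv
          have u3 : d u r ≠ 2 * m + 1 := fun h => u2 (Finset.mem_filter.2 ⟨u1, h⟩)
          have v3 : d v r ≠ 2 * m + 1 := fun h => v2 (Finset.mem_filter.2 ⟨v1, h⟩)
          have b1 := hD u u1 r hr
          have b2 := hD v v1 r hr
          have b3 := hD u u1 l hl
          have b4 := hD v v1 l hl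
          have b5 := hd.four u v l r
          omega)
        have hcE : (S \ E).card + E.card = S.card :=
          Finset.card_sdiff_add_card_eq_card (Finset.filter_subset _ _)
        obtain ⟨P, hPS, hPc, hP⟩ := path_card hd hS hl hr (N := 2 * m + 1) (by omega)
        have hbig : 2 * m + 2 ≤ S.card := by
          have : insert l P ⊆ S := Finset.insert_subset hl hPS
          have h3 := Finset.card_le_card this
          rw [Finset.card_insert_of_notMem (fun h => by
            have := (hP l h).1
            rw [(hd.z l l).2 rfl] at this
            omega)] at h3
          omega
        nlinarith

end

theorem stmt_14 (k : ℕ) (hk : 2 ≤ k) (hke : Even k) {V : Type} [Fintype V]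
    {n : ℕ} (hn : Fintype.card V = n) (T : SimpleGraph V) (hT : T.IsTree)
    (hdiam : k + 4 ≤ gdiam T) :
    fk k n < mdi T k := by
  classical
  obtain ⟨m, rfl⟩ := hke
  rw [mdi_eq hT, ← two_mul]
  have hd := tm_of_tree hT
  have hle : ∀ u v, T.dist u v ≤ gdiam T := fun u v =>
    (Finset.le_sup (f := T.dist u) (Finset.mem_univ v)).trans
      (Finset.le_sup (f := ecc T) (Finset.mem_univ u))
  haveI := hT.connected.nonempty
  obtain ⟨l, -, h1⟩ := Finset.exists_mem_eq_sup Finset.univ Finset.univ_nonempty (ecc T)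
  obtain ⟨r, -, h2⟩ := Finset.exists_mem_eq_sup Finset.univ Finset.univ_nonempty (T.dist l)
  have hlr : gdiam T = T.dist l r := by
    unfold gdiam; rw [h1]; unfold ecc; rw [h2]
  obtain ⟨S', a1, a2, a3, a4⟩ := XB_step (S := Finset.univ) (l := l) (r := r) (m := m) hd
    (fun _ _ _ _ _ _ => Finset.mem_univ _) (by omega) (fun u _ v _ => hlr ▸ hle u v)
    (Finset.mem_univ _) (Finset.mem_univ _) 1 le_rfl (by omega)
  have a5 := XB_weak hd (by omega) _ S' le_rfl a1 a3
  rw [Finset.card_univ, hn] at a2 a4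
  generalize (MS T.dist (2 * m) Finset.univ).card = M at *
  have a6 : m * n + 2 * (m + 1) ≤ (m + 1) * M := by omega
  have hq := Nat.lt_div_mul_add (a := n) (b := m + 1) (by omega)
  have hq2 := Nat.div_mul_le_self n (m + 1)
  have hdl : T.dist l r < n := by
    obtain ⟨p, hp, hpl⟩ := hT.connected.exists_path_of_dist l r
    have := hp.length_lt
    omega
  unfold fk
  rw [if_neg (by omega)]
  have e1 : 2 * m % 2 = 0 := by omega
  have e2 : 2 * m / 2 = m := by omega
  rw [e1, e2, Nat.sub_zero]
  have hqn : n / (m+1) ≤ n := Nat.div_le_self _ _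
  generalize n / (m + 1) = q at *
  by_contra hcon
  have h3 : M + q ≤ n + 1 := by omega
  nlinarith
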